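/- arXiv:2204.08076 — 7 statements merged into one kernel-verified Lean document; each statement's English description precedes it below -/
import Mathlib

section
/- Let p, q be coprime integers with 0 ≤ p ≤ q and q ≥ 1, and let ℓ_1 ℓ_2 ⋯ ℓ_{2q} be the letters of the Farey word W_{p/q}. Then for every integer i with 1 ≤ i ≤ q−1 one has ℓ_{q+i} = ℓ_{q−i}^{-1}; consequently, in the free group on the two generators X and Y, the product ℓ_1 ℓ_2 ⋯ ℓ_{2q−1} of the first 2q−1 letters is conjugate to the q-th letter ℓ_q, which is X^{±1} if q is even and Y^{±1} if q is odd. -/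
/-- Modified ceiling: `⌈x⌉` if `x ∉ ℤ`, and `x + 1` if `x ∈ ℤ`. -/
def mceil (x : ℚ) : ℤ := if x.den = 1 then x.num + 1 else ⌈x⌉

/-- The sign `ε_i = (−1)^{⌈pi/q⌉' + i + 1}` of the `i`-th letter of the Farey word `W_{p/q}`. -/
def fareySign (p q i : ℕ) : ℤˣ := (-1) ^ (mceil ((p * i : ℚ) / q) + (i : ℤ) + 1)

/-- The `i`-th letter (`1 ≤ i ≤ 2q`) of the Farey word `W_{p/q}`, as an element of the free
group on two generators `X = FreeGroup.of false` and `Y = FreeGroup.of true`: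
it is `Y^{ε_i}` if `i` is odd and `X^{ε_i}` if `i` is even. -/
def fareyLetter (p q i : ℕ) : FreeGroup Bool :=
  (if i % 2 = 1 then FreeGroup.of true else FreeGroup.of false) ^ ((fareySign p q i : ℤˣ) : ℤ)

theorem mceil_eq_floor_add_one (x : ℚ) : mceil x = ⌊x⌋ + 1 := by
  unfold mceil
  split_ifs with h
  · rw [← Rat.coe_int_num_of_den_eq_one h]
    simp
  · refine Int.ceil_eq_iff.2 ⟨?_, ?_⟩
    · push_cast
      rw [add_sub_cancel_right]
      refine lt_of_le_of_ne (Int.floor_le x) fun hx => h ?_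
      rw [← hx]
      exact Rat.den_intCast _
    · push_cast
      exact (Int.lt_floor_add_one x).le

theorem mceil_natCast_mul_div (p q i : ℕ) :
    mceil ((p * i : ℚ) / q) = (p * i : ℤ) / q + 1 := by
  rw [mceil_eq_floor_add_one]
  have h := Rat.floor_intCast_div_natCast (p * i : ℤ) q
  push_cast at h
  rw [h]

theorem Int.neg_ediv_of_pos_of_not_dvd {a b : ℤ} (hb : 0 < b) (h : ¬ b ∣ a) :
    -a / b = -(a / b) - 1 := by
  have hr : a % b ≠ 0 := fun h0 => h (Int.dvd_of_emod_eq_zero h0)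
  have h1 := Int.emod_nonneg a hb.ne'
  have h2 := Int.emod_lt_of_pos a hb
  have h3 := Int.mul_ediv_add_emod a b
  refine (Int.ediv_emod_unique (r := b - a % b) hb).2 ⟨?_, ?_, ?_⟩ |>.1
  · linear_combination -h3
  · omega
  · omega

theorem fareySign_add_eq_neg {p q i : ℕ} (hcop : Nat.Coprime p q) (hi : 1 ≤ i) (hiq : i < q) :
    fareySign p q (q + i) = -fareySign p q (q - i) := by
  have hq : (0 : ℤ) < q := by omega
  have hdvd : ¬ (q : ℤ) ∣ p * i := by
    intro h
    have h' : q ∣ p * i := by exact_mod_cast h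
    exact absurd (Nat.le_of_dvd hi (hcop.symm.dvd_of_dvd_mul_left h')) (by omega)
  have hadd : (p * (q + i : ℕ) : ℤ) / q = p + (p * i : ℤ) / q := by
    rw [show (p * (q + i : ℕ) : ℤ) = p * i + p * q by push_cast; ring,
      Int.add_mul_ediv_right _ _ hq.ne', add_comm]
  have hsub : (p * (q - i : ℕ) : ℤ) / q = p - (p * i : ℤ) / q - 1 := by
    rw [show (p * (q - i : ℕ) : ℤ) = -(p * i) + p * q by rw [Nat.cast_sub hiq.le]; ring,
      Int.add_mul_ediv_right _ _ hq.ne', Int.neg_ediv_of_pos_of_not_dvd hq hdvd]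
    ring
  unfold fareySign
  rw [mceil_natCast_mul_div, mceil_natCast_mul_div, hadd, hsub, Nat.cast_sub hiq.le, Nat.cast_add]
  generalize (p * i : ℤ) / q = f
  have hexp : (p + f + 1 + (q + i : ℤ) + 1 : ℤ) =
      (p - f - 1 + 1 + (q - i : ℤ) + 1) + (2 * (f + i) + 1) := by ring
  rw [hexp, zpow_add, Odd.neg_one_zpow ⟨f + i, rfl⟩, mul_neg_one]

theorem fareyLetter_add_eq_inv {p q i : ℕ} (hcop : Nat.Coprime p q) (hi : 1 ≤ i) (hiq : i < q) :
    fareyLetter p q (q + i) = (fareyLetter p q (q - i))⁻¹ := by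
  have hpar : (q + i) % 2 = (q - i) % 2 := by omega
  unfold fareyLetter
  rw [hpar, fareySign_add_eq_neg hcop hi hiq, Units.val_neg, zpow_neg]

/-- A product of an odd number of factors whose outer factors are pairwise inverse to each other
is conjugate to the central factor. -/
theorem isConj_prod_range_of_symm {G : Type*} [Group G] (f : ℕ → G) (c k : ℕ) (hk : k ≤ c)
    (hf : ∀ i, 1 ≤ i → i ≤ k → f (c + i) = (f (c - i))⁻¹) :
    IsConj ((List.range (2 * k + 1)).map fun j => f (c - k + j)).prod (f c) := by
  induction k with
  | zero => simpa using IsConj.refl (f c)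
  | succ k ih =>
    refine IsConj.trans ?_ (ih (by omega) fun i h1 h2 => hf i h1 (by omega))
    have hlast : c - (k + 1) + (2 * k + 2) = c + (k + 1) := by omega
    have hmid : ∀ j, c - (k + 1) + (j + 1) = c - k + j := by omega
    rw [show 2 * (k + 1) + 1 = 2 * k + 2 + 1 by ring, List.range_succ, List.map_append,
      List.prod_append, List.range_succ_eq_map]
    simp only [List.map_singleton, List.prod_singleton, hlast, hf (k + 1) (by omega) le_rfl]
    simp only [List.map_cons, List.map_map, List.prod_cons, Function.comp_def, Nat.succ_eq_add_one,
      hmid, add_zero]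
    exact (isConj_iff.2 ⟨_, rfl⟩ : IsConj _ _).symm

/-- The letters of the Farey word `W_{p/q}` satisfy `ℓ_{q+i} = ℓ_{q−i}⁻¹` for `1 ≤ i ≤ q−1`;
consequently the product of the first `2q−1` letters is conjugate to the `q`-th letter,
which is `X^{±1}` if `q` is even and `Y^{±1}` if `q` is odd. -/
theorem farey_word_symmetry (p q : ℕ) (hq : 1 ≤ q) (hpq : p ≤ q) (hcop : Nat.Coprime p q) :
    (∀ i : ℕ, 1 ≤ i → i ≤ q - 1 →
      fareyLetter p q (q + i) = (fareyLetter p q (q - i))⁻¹) ∧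
    IsConj (((List.range (2 * q - 1)).map (fun j => fareyLetter p q (j + 1))).prod)
      (fareyLetter p q q) ∧
    (if q % 2 = 0 then ∃ ε : ℤˣ, fareyLetter p q q = FreeGroup.of false ^ ((ε : ℤˣ) : ℤ)
      else ∃ ε : ℤˣ, fareyLetter p q q = FreeGroup.of true ^ ((ε : ℤˣ) : ℤ)) := by
  refine ⟨fun i h1 h2 => fareyLetter_add_eq_inv hcop h1 (by omega), ?_, ?_⟩
  · have h := isConj_prod_range_of_symm (fareyLetter p q) q (q - 1) (by omega)
      fun i h1 h2 => fareyLetter_add_eq_inv hcop h1 (by omega)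
    rw [show 2 * (q - 1) + 1 = 2 * q - 1 by omega, show q - (q - 1) = 1 by omega] at h
    simpa only [add_comm 1] using h
  · split_ifs with h
    · exact ⟨fareySign p q q, by simp [fareyLetter, h]⟩
    · exact ⟨fareySign p q q, by simp [fareyLetter, Nat.mod_two_ne_zero.1 h]⟩
end

section
/- Let p/q < r/s be Farey neighbours in lowest terms with p, r ≥ 0 and q, s ≥ 1 (so qr − ps = 1) and with both fractions in [0,1]. Then the letter sequence of the Farey word W_{(p+r)/(q+s)} is obtained from the concatenation of the letter sequences of W_{p/q} and W_{r/s} by replacing the (q+s)-th letter of the concatenation with its inverse (all other letters agree). -/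
/-- The `i`-th letter (`1 ≤ i ≤ 2q + 2s`) of the concatenation of the letter sequences of
`W_{p/q}` and `W_{r/s}`. -/
def concatLetter (p q r s i : ℕ) : FreeGroup Bool :=
  if i ≤ 2 * q then fareyLetter p q i else fareyLetter r s (i - 2 * q)

theorem mceil_natCast_div (a b : ℕ) : mceil ((a : ℚ) / b) = ((a / b : ℕ) : ℤ) + 1 := by
  have hfloor : ⌊(a : ℚ) / b⌋ = ((a / b : ℕ) : ℤ) := by
    simpa using Rat.floor_intCast_div_natCast (a : ℤ) b
  rw [← hfloor, mceil]
  split_ifs with hden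
  · rw [Rat.floor_def', hden]
    simp
  · rw [Int.ceil_eq_iff]
    have hne : (⌊(a : ℚ) / b⌋ : ℚ) ≠ a / b := fun h => hden (by rw [← h]; exact Rat.den_intCast _)
    have hlt := (Int.floor_le ((a : ℚ) / b)).lt_of_ne hne
    push_cast
    refine ⟨by linarith, ?_⟩
    exact (Int.lt_floor_add_one _).le

theorem fareySign_eq_pow (p q i : ℕ) : fareySign p q i = (-1) ^ (p * i / q + i) := by
  have h := mceil_natCast_div (p * i) q
  push_cast at h
  rw [fareySign, h]
  have hexp : (p : ℤ) * i / q + 1 + i + 1 = ((p * i / q + i + 2 : ℕ) : ℤ) := by push_cast; ring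
  rw [hexp, zpow_natCast, pow_add _ _ 2]
  simp

theorem fareyLetter_eq_of_div_mod_two_eq {p q i r s j : ℕ} (hij : i % 2 = j % 2)
    (h : (p * i / q) % 2 = (r * j / s) % 2) : fareyLetter p q i = fareyLetter r s j := by
  have hsign : fareySign p q i = fareySign r s j := by
    rw [fareySign_eq_pow, fareySign_eq_pow]
    refine neg_one_pow_congr ?_
    rw [Nat.even_iff, Nat.even_iff]
    omega
  rw [fareyLetter, fareyLetter, hsign, hij]

theorem fareyLetter_eq_inv_of_div_mod_two_eq {p q i r s j : ℕ} (hij : i % 2 = j % 2)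
    (h : (p * i / q) % 2 = (r * j / s + 1) % 2) :
    fareyLetter p q i = (fareyLetter r s j)⁻¹ := by
  have hsign : fareySign p q i = -fareySign r s j := by
    rw [fareySign_eq_pow, fareySign_eq_pow, ← neg_one_mul ((-1) ^ (r * j / s + j)), ← pow_succ']
    refine neg_one_pow_congr ?_
    rw [Nat.even_iff, Nat.even_iff]
    omega
  rw [fareyLetter, fareyLetter, hsign, hij, Units.val_neg, zpow_neg]

/-- Below `2q`, the mediant has the same integer parts as `p/q` except at `q + s`. -/
theorem mediant_mul_div_left {p q r s i : ℕ} (hq : 1 ≤ q) (hs : 1 ≤ s)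
    (hcop : Nat.Coprime p q) (hnbr : q * r = p * s + 1) (hi : i ≤ 2 * q) (hne : i ≠ q + s) :
    (p + r) * i / (q + s) = p * i / q := by
  have hdiv := Nat.div_add_mod (p * i) q
  have hlt := Nat.mod_lt (p * i) hq
  set m := p * i / q
  set t := p * i % q
  have key : q * ((p + r) * i) = q * (m * (q + s)) + (t * (q + s) + i) := by
    linear_combination (q + s) * (-hdiv) + i * hnbr
  rw [Nat.div_eq_iff (by omega)]
  suffices m * (q + s) ≤ (p + r) * i ∧ (p + r) * i < m * (q + s) + (q + s) by omega
  refine ⟨le_of_mul_le_mul_left (by omega) hq, ?_⟩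
  by_contra! hge
  have hge' := Nat.mul_le_mul_left q hge
  have hbound : q * (q + s) ≤ t * (q + s) + i := by linarith
  have ht : t + 1 = q := by
    by_contra hne'
    have : t + 2 ≤ q := by omega
    nlinarith
  have hi' : q + s ≤ i := by nlinarith
  have hdvd : q ∣ i - s := by
    refine hcop.symm.dvd_of_dvd_mul_left ?_
    have h1 : q ∣ p * i + 1 := ⟨m + 1, by linarith⟩
    have h2 : q ∣ p * s + 1 := ⟨r, hnbr.symm⟩
    have h3 := Nat.dvd_sub h1 h2
    rwa [Nat.add_sub_add_right, ← Nat.mul_sub] at h3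
  obtain ⟨k, hk⟩ := hdvd
  have hk2 : k < 2 := by
    by_contra! h
    have := Nat.mul_le_mul_left q h
    omega
  interval_cases k <;> omega

/-- Beyond `2q`, the integer parts of the mediant are those of `r/s`, shifted by `2p`, except at
`q + s`. -/
theorem mediant_mul_div_right {p q r s j : ℕ} (hs : 1 ≤ s)
    (hcop : Nat.Coprime r s) (hnbr : q * r = p * s + 1) (hj : 1 ≤ j) (hj' : j ≤ 2 * s)
    (hne : j + q ≠ s) :
    (p + r) * (j + 2 * q) / (q + s) = 2 * p + r * j / s := by
  have hdiv := Nat.div_add_mod (r * j) s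
  have hlt := Nat.mod_lt (r * j) hs
  set m := r * j / s
  set t := r * j % s
  have key : s * ((p + r) * (j + 2 * q)) + j =
      s * ((2 * p + m) * (q + s)) + (t * (q + s) + 2 * s) := by
    zify at hdiv hnbr ⊢
    linear_combination (q + s : ℤ) * (-hdiv) + (2 * s - j : ℤ) * hnbr
  rw [Nat.div_eq_iff (by omega)]
  suffices (2 * p + m) * (q + s) ≤ (p + r) * (j + 2 * q) ∧
      (p + r) * (j + 2 * q) < (2 * p + m) * (q + s) + (q + s) by omega
  refine ⟨le_of_mul_le_mul_left (by omega) hs, ?_⟩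
  by_contra! hge
  have hge' := Nat.mul_le_mul_left s hge
  have hbound : s * (q + s) + j ≤ t * (q + s) + 2 * s := by linarith
  have ht : t + 1 = s := by
    by_contra hne'
    have : t + 2 ≤ s := by omega
    nlinarith
  have hjs : j + q ≤ s := by nlinarith
  have hdvd : s ∣ j + q := by
    refine hcop.symm.dvd_of_dvd_mul_left ⟨m + 1 + p, ?_⟩
    linarith
  have := Nat.le_of_dvd (by omega) hdvd
  omega

/-- If `p/q < r/s` are Farey neighbours in `[0,1]` (so `qr − ps = 1`), then the letter sequence
of the mediant Farey word `W_{(p+r)/(q+s)}` is obtained from the concatenation of the letter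
sequences of `W_{p/q}` and `W_{r/s}` by inverting the `(q+s)`-th letter. -/
theorem farey_word_mediant (p q r s : ℕ) (hq : 1 ≤ q) (hs : 1 ≤ s)
    (hpq : p ≤ q) (hrs : r ≤ s) (hcop1 : Nat.Coprime p q) (hcop2 : Nat.Coprime r s)
    (hnbr : q * r = p * s + 1) :
    ∀ i : ℕ, 1 ≤ i → i ≤ 2 * (q + s) →
      fareyLetter (p + r) (q + s) i =
        if i = q + s then (concatLetter p q r s i)⁻¹ else concatLetter p q r s i := by
  intro i _ hi
  rw [concatLetter]
  split_ifs with hmid hle hle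
  · subst hmid
    refine fareyLetter_eq_inv_of_div_mod_two_eq rfl ?_
    obtain ⟨r, rfl⟩ : ∃ r', r = r' + 1 :=
      Nat.exists_eq_succ_of_ne_zero (by rintro rfl; omega)
    have hdiv : p * (q + s) / q = p + r := by
      rw [Nat.div_eq_iff hq]
      have : p * (q + s) + 1 = (p + r) * q + q := by linarith
      omega
    rw [hdiv, Nat.mul_div_cancel _ (by omega), add_assoc]
  · subst hmid
    obtain ⟨j, rfl⟩ : ∃ j, s = q + j := Nat.exists_eq_add_of_le (by omega)
    obtain ⟨d, hd⟩ : ∃ d, r = p + d := Nat.exists_eq_add_of_le (by nlinarith)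
    have hsub : q + (q + j) - 2 * q = j := by omega
    rw [hsub]
    refine fareyLetter_eq_inv_of_div_mod_two_eq (by omega) ?_
    have hdiv : r * j / (q + j) + 1 = d := by
      obtain ⟨d, rfl⟩ : ∃ d', d = d' + 1 :=
        Nat.exists_eq_succ_of_ne_zero (by rintro rfl; subst hd; nlinarith)
      rw [Nat.add_right_cancel_iff, Nat.div_eq_iff hs]
      have : r * j + 1 = d * (q + j) + (q + j) := by subst hd; linarith
      omega
    rw [hdiv, Nat.mul_div_cancel _ (by omega)]
    omega
  · exact fareyLetter_eq_of_div_mod_two_eq rfl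
      (by rw [mediant_mul_div_left hq hs hcop1 hnbr hle hmid])
  · obtain ⟨j, rfl⟩ : ∃ j, i = j + 2 * q := Nat.exists_eq_add_of_le' (by omega)
    rw [Nat.add_sub_cancel]
    refine fareyLetter_eq_of_div_mod_two_eq (by omega) ?_
    rw [mediant_mul_div_right hs hcop2 hnbr (by omega) (by omega) (by omega)]
    omega
end

section
/- Let p/q < r/s be Farey neighbours in lowest terms with p, r ≥ 0, q, s ≥ 1 and qr − ps = 1. Then for every integer i with 0 < i ≤ 2q there is no integer lying strictly between the rational numbers p·i/q and (p+r)·i/(q+s). -/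
/-- If `p/q < r/s` are Farey neighbours in lowest terms (`qr − ps = 1`), then for every
integer `i` with `0 < i ≤ 2q` there is no integer strictly between `p·i/q` and
`(p+r)·i/(q+s)`. -/
theorem no_integer_between_left (p q r s : ℤ) (hp : 0 ≤ p) (hr : 0 ≤ r)
    (hq : 1 ≤ q) (hs : 1 ≤ s) (hcop1 : Int.gcd p q = 1) (hcop2 : Int.gcd r s = 1)
    (hnbr : q * r - p * s = 1) :
    ∀ i : ℤ, 0 < i → i ≤ 2 * q →
      ¬ ∃ n : ℤ, ((p * i : ℤ) : ℚ) / (q : ℚ) < (n : ℚ) ∧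
        (n : ℚ) < (((p + r) * i : ℤ) : ℚ) / ((q + s : ℤ) : ℚ) := by
  rintro i - hi ⟨n, hleft, hright⟩
  have hq' : (0 : ℚ) < (q : ℚ) := by exact_mod_cast hq
  have hqs' : (0 : ℚ) < ((q + s : ℤ) : ℚ) := by exact_mod_cast (by lia : 0 < q + s)
  rw [div_lt_iff₀ hq'] at hleft
  rw [lt_div_iff₀ hqs'] at hright
  have ha : 1 ≤ n * q - p * i := by
    have : p * i < n * q := by exact_mod_cast hleft
    lia
  have hb : 1 ≤ (p + r) * i - n * (q + s) := by
    have : n * (q + s) < (p + r) * i := by exact_mod_cast hright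
    lia
  have hdecomp : (n * q - p * i) * (q + s) + ((p + r) * i - n * (q + s)) * q = i := by
    linear_combination i * hnbr
  have := mul_le_mul_of_nonneg_right ha (by lia : 0 ≤ q + s)
  have := mul_le_mul_of_nonneg_right hb (by lia : 0 ≤ q)
  linarith
end

section
/- Let p/q < r/s be Farey neighbours in lowest terms with p, r ≥ 0, q, s ≥ 1 and qr − ps = 1. Then for every integer i with 0 < i < 2s there is no integer lying strictly between the rational numbers r·i/s + 2p and (p+r)·(2q+i)/(q+s). -/
/-- If `p/q < r/s` are Farey neighbours in lowest terms (`qr − ps = 1`), then for every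
integer `i` with `0 < i < 2s` there is no integer strictly between `r·i/s + 2p` and
`(p+r)·(2q+i)/(q+s)`. -/
theorem no_integer_between_right (p q r s : ℤ) (hp : 0 ≤ p) (hr : 0 ≤ r)
    (hq : 1 ≤ q) (hs : 1 ≤ s) (hcop1 : Int.gcd p q = 1) (hcop2 : Int.gcd r s = 1)
    (hnbr : q * r - p * s = 1) :
    ∀ i : ℤ, 0 < i → i < 2 * s →
      ¬ ∃ n : ℤ, ((r * i : ℤ) : ℚ) / (s : ℚ) + 2 * (p : ℚ) < (n : ℚ) ∧
        (n : ℚ) < (((p + r) * (2 * q + i) : ℤ) : ℚ) / ((q + s : ℤ) : ℚ) := by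
  rintro i hi - ⟨n, hlow, hupp⟩
  have hs' : (0 : ℚ) < s := by exact_mod_cast (by lia : 0 < s)
  have hqs' : (0 : ℚ) < ((q + s : ℤ) : ℚ) := by exact_mod_cast (by lia : 0 < q + s)
  rw [← lt_sub_iff_add_lt, div_lt_iff₀ hs'] at hlow
  rw [lt_div_iff₀ hqs'] at hupp
  have hlow' : r * i < (n - 2 * p) * s := by exact_mod_cast hlow
  have hupp' : n * (q + s) < (p + r) * (2 * q + i) := by exact_mod_cast hupp
  -- `i` is an integer combination of the determinants of `(n - 2p, i)` with the two neighbours.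
  have hi_eq : i = s * ((n - 2 * p) * q - p * i) - q * ((n - 2 * p) * s - r * i) := by
    linear_combination -i * hnbr
  have hleft : (n - 2 * p) * q - p * i ≤ 0 := by linarith
  nlinarith
end

section
/- Let R be a commutative ring and let d be a function from normalised pairs to the units of R which is multiplicative on Farey neighbours, i.e. d(γ ⊕ β) = d(γ)·d(β) whenever γ, β are Farey neighbours. Let F be a Farey recursive function with anti-determinant d, let γ_L, γ_R be Farey neighbours with mediant α = γ_L ⊕ γ_R, let (β_k)_{k∈ℤ} be the associated boundary sequence, and set M_α = [[0, 1], [−d(α), −F(α)]], an invertible 2×2 matrix over R. Then for every n ∈ ℤ: if n ≥ 0 then M_α^n · (F(β_0), F(β_1))ᵀ = (F(β_n), F(β_{n+1}))ᵀ; if n = −1 then M_α^n · (F(β_0), F(β_1))ᵀ = (d(β_{−1})^{−1} F(β_{−1}), F(β_0))ᵀ; and if n ≤ −2 then M_α^n · (F(β_0), F(β_1))ᵀ = (d(β_{−1})^{−1} d(α)^{n+1} F(β_n), d(β_{−1})^{−1} d(α)^{n+2} F(β_{n+1}))ᵀ, where powers of the unit d(α) with negative exponents denote powers of its inverse. -/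
/-- A normalised pair `(p, q) ∈ ℤ × ℤ` representing an extended rational: `gcd(p,q) = 1`
and either `q > 0`, or `q = 0` and `p = 1` (representing `∞`). -/
def Normalised (x : ℤ × ℤ) : Prop :=
  Int.gcd x.1 x.2 = 1 ∧ (0 < x.2 ∨ (x.2 = 0 ∧ x.1 = 1))

/-- Two pairs `(p,q)` and `(r,s)` are Farey neighbours if `|ps − qr| = 1`.
Their mediant is the componentwise sum `(p+r, q+s)`. -/
def FareyNbr (x y : ℤ × ℤ) : Prop := (x.1 * y.2 - x.2 * y.1).natAbs = 1

/-- `d` is multiplicative on Farey neighbours: `d(γ ⊕ β) = d(γ)·d(β)`. -/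
def MultiplicativeOnNbrs {R : Type*} [CommRing R] (d : ℤ × ℤ → Rˣ) : Prop :=
  ∀ γ β : ℤ × ℤ, Normalised γ → Normalised β → FareyNbr γ β → d (γ + β) = d γ * d β

/-- `F` is a Farey recursive function with anti-determinant `d`:
`F((γ ⊕ α) ⊕ α) = −d(α)·F(γ) − F(α)·F(γ ⊕ α)` for Farey neighbours `γ, α`. -/
def IsFareyRecursive {R : Type*} [CommRing R] (d : ℤ × ℤ → Rˣ) (F : ℤ × ℤ → R) : Prop :=
  ∀ γ α : ℤ × ℤ, Normalised γ → Normalised α → FareyNbr γ α →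
    F (γ + α + α) = -(d α : R) * F γ - F α * F (γ + α)

theorem FareyNbr.symm {x y : ℤ × ℤ} (h : FareyNbr x y) : FareyNbr y x := by
  unfold FareyNbr at *
  rw [← h, ← Int.natAbs_neg]
  congr 1
  ring

theorem FareyNbr.add_left {x y : ℤ × ℤ} (h : FareyNbr x y) : FareyNbr (x + y) y := by
  unfold FareyNbr at *
  rw [← h]
  congr 1
  simp only [Prod.fst_add, Prod.snd_add]
  ring

/-- The mediant of Farey neighbours is a normalised pair. -/
theorem Normalised.add {x y : ℤ × ℤ} (hx : Normalised x) (hy : Normalised y)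
    (h : FareyNbr x y) : Normalised (x + y) := by
  refine ⟨?_, ?_⟩
  · rw [← Int.isCoprime_iff_gcd_eq_one]
    rcases Int.natAbs_eq_iff.mp h with h | h
    · exact ⟨y.2, -y.1, by simp only [Prod.fst_add, Prod.snd_add]; push_cast at h; linarith⟩
    · exact ⟨-y.2, y.1, by simp only [Prod.fst_add, Prod.snd_add]; push_cast at h; linarith⟩
  · left
    rw [Prod.snd_add]
    rcases hx.2 with hx | hx <;> rcases hy.2 with hy | hy
    · omega
    · omega
    · omega
    · simp [FareyNbr, hx.1, hy.1] at h

/-- Repeatedly adding a Farey neighbour `y` of `x` to `x` stays among the normalised neighbours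
of `y`. -/
theorem Normalised.add_zsmul {x y : ℤ × ℤ} (hx : Normalised x) (hy : Normalised y)
    (h : FareyNbr x y) {k : ℤ} (hk : 0 ≤ k) :
    Normalised (x + k • y) ∧ FareyNbr (x + k • y) y := by
  induction k, hk using Int.leInduction with
  | base => simpa using ⟨hx, h⟩
  | succ k _ ih =>
    rw [add_smul, one_smul, ← add_assoc]
    exact ⟨ih.1.add hy ih.2, ih.2.add_left⟩

/-- The Farey recursion along the arithmetic progression `x + k • y`. -/
theorem IsFareyRecursive.add_zsmul {R : Type*} [CommRing R] {d : ℤ × ℤ → Rˣ} {F : ℤ × ℤ → R}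
    (hF : IsFareyRecursive d F) {x y : ℤ × ℤ} (hx : Normalised x) (hy : Normalised y)
    (h : FareyNbr x y) {k : ℤ} (hk : 0 ≤ k) :
    F (x + (k + 2) • y) = -(d y : R) * F (x + k • y) - F y * F (x + (k + 1) • y) := by
  obtain ⟨hn, hf⟩ := hx.add_zsmul hy h hk
  rw [← (by module : x + k • y + y + y = x + (k + 2) • y),
    ← (by module : x + k • y + y = x + (k + 1) • y)]
  exact hF _ _ hn hy hf

/-- Step down an integer power of an invertible matrix acting on a vector. -/
theorem Matrix.zpow_mulVec_eq_of_mulVec_eq {m R : Type*} [Fintype m] [DecidableEq m] [CommRing R]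
    {M : Matrix m m R} (hM : IsUnit M.det) {n : ℤ} {v w : m → R}
    (h : M.mulVec w = (M ^ (n + 1)).mulVec v) : (M ^ n).mulVec v = w := by
  apply Matrix.mulVec_injective_of_isUnit ((Matrix.isUnit_iff_isUnit_det M).mpr hM)
  rw [h, Matrix.mulVec_mulVec, add_comm n 1, Matrix.zpow_one_add hM]

/-- Adaptation of Theorem 6.1 of Chesebro et al.: the values of a Farey recursive function `F`
with anti-determinant `d` along the boundary sequence `(β_k)` about `α = γ_L ⊕ γ_R` are
computed by the integer powers of the matrix `M_α = [[0, 1], [−d(α), −F(α)]]`. -/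
theorem farey_recursive_boundary {R : Type*} [CommRing R] (d : ℤ × ℤ → Rˣ) (F : ℤ × ℤ → R)
    (hd : MultiplicativeOnNbrs d) (hF : IsFareyRecursive d F)
    (γL γR : ℤ × ℤ) (hγL : Normalised γL) (hγR : Normalised γR) (hnbr : FareyNbr γL γR)
    (α : ℤ × ℤ) (hα : α = γL + γR)
    (β : ℤ → ℤ × ℤ) (hβ : ∀ k : ℤ, β k = if 0 ≤ k then γR + k • α else γL + (-k - 1) • α)
    (M : Matrix (Fin 2) (Fin 2) R) (hM : M = !![0, 1; -(d α : R), -F α]) :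
    ∀ n : ℤ,
      (0 ≤ n → (M ^ n).mulVec ![F (β 0), F (β 1)] = ![F (β n), F (β (n + 1))]) ∧
      (n = -1 → (M ^ n).mulVec ![F (β 0), F (β 1)] =
        ![(((d (β (-1)))⁻¹ : Rˣ) : R) * F (β (-1)), F (β 0)]) ∧
      (n ≤ -2 → (M ^ n).mulVec ![F (β 0), F (β 1)] =
        ![(((d (β (-1)))⁻¹ * d α ^ (n + 1) : Rˣ) : R) * F (β n),
          (((d (β (-1)))⁻¹ * d α ^ (n + 2) : Rˣ) : R) * F (β (n + 1))]) := by
  have hnα : Normalised α := hα ▸ hγL.add hγR hnbr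
  have hRα : FareyNbr γR α := by
    rw [hα]; exact hnbr.add_left.symm
  have hLα : FareyNbr γL α := by
    rw [hα, add_comm]; exact hnbr.symm.add_left.symm
  have hdα : d α = d γL * d γR := hα ▸ hd _ _ hγL hγR hnbr
  have hdet : IsUnit M.det := by
    simp [hM, Matrix.det_fin_two_of]
  have hMv (a b : R) : M.mulVec ![a, b] = ![b, -(d α : R) * a - F α * b] := by
    rw [hM]
    ext i
    fin_cases i <;> simp [Matrix.mulVec, dotProduct, Fin.sum_univ_two, sub_eq_add_neg]
  have hR (k : ℤ) (hk : 0 ≤ k) : β k = γR + k • α := by rw [hβ, if_pos hk]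
  have hL (k : ℤ) (hk : k ≤ -1) : β k = γL + (-k - 1) • α := by rw [hβ, if_neg (by omega)]
  have hβ0 : β 0 = γR := by simp [hR]
  have hβ1 : β (-1) = γL := by simp [hL]
  have hFβ1 : F (β 1) = -(d γR : R) * F γL - F γR * F α := by
    rw [hR 1 one_pos.le, one_smul, add_comm, hα]
    exact hF _ _ hγL hγR hnbr
  have hFβ2 : F (β (-2)) = -(d γL : R) * F γR - F γL * F α := by
    rw [hL (-2) (by norm_num), hα, (by module : γL + (- -2 - 1 : ℤ) • (γL + γR) = γR + γL + γL),
      add_comm γL γR]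
    exact hF _ _ hγR hγL hnbr.symm
  have nonneg (n : ℤ) (hn : 0 ≤ n) :
      (M ^ n).mulVec ![F (β 0), F (β 1)] = ![F (β n), F (β (n + 1))] := by
    induction n, hn using Int.leInduction with
    | base => simp
    | succ n hn ih =>
      rw [add_comm n 1, Matrix.zpow_one_add hdet, ← Matrix.mulVec_mulVec, ih, hMv,
        add_comm 1 n, add_assoc n 1 1, one_add_one_eq_two, hR n hn, hR (n + 1) (by omega),
        hR (n + 2) (by omega), hF.add_zsmul hγR hnα hRα hn]
  have neg_one : (M ^ (-1 : ℤ)).mulVec ![F (β 0), F (β 1)] =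
      ![(((d (β (-1)))⁻¹ : Rˣ) : R) * F (β (-1)), F (β 0)] := by
    apply Matrix.zpow_mulVec_eq_of_mulVec_eq hdet
    rw [hMv, neg_add_cancel, zpow_zero, Matrix.one_mulVec, hFβ1, hβ0, hβ1, hdα]
    congr 2
    push_cast
    linear_combination (-(d γR : R) * F γL) * (d γL).mul_inv
  have le_neg_two (n : ℤ) (hn : n ≤ -2) : (M ^ n).mulVec ![F (β 0), F (β 1)] =
      ![(((d (β (-1)))⁻¹ * d α ^ (n + 1) : Rˣ) : R) * F (β n),
        (((d (β (-1)))⁻¹ * d α ^ (n + 2) : Rˣ) : R) * F (β (n + 1))] := by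
    induction n, hn using Int.leInductionDown with
    | base =>
      apply Matrix.zpow_mulVec_eq_of_mulVec_eq hdet
      norm_num only
      rw [neg_one, hMv, hFβ2, hβ0, hβ1]
      simp only [zpow_neg_one, zpow_zero, mul_one, Units.val_mul]
      congr 2
      linear_combination (F γR + ((d γL)⁻¹ : Rˣ) * F γL * F α) * (d α).mul_inv +
        ((d α : R) * ((d α)⁻¹ : Rˣ) * F γR) * ((d γL).mul_inv)
    | pred n hn ih =>
      apply Matrix.zpow_mulVec_eq_of_mulVec_eq hdet
      have hrec := hF.add_zsmul hγL hnα hLα (k := -(n + 1) - 1) (by omega)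
      rw [(by ring : -(n + 1) - 1 + 2 = -(n - 1) - 1), (by ring : -(n + 1) - 1 + 1 = -n - 1),
        ← hL _ (by omega), ← hL _ (by omega), ← hL _ (by omega)] at hrec
      rw [sub_add_cancel, ih, hMv, hrec, (by ring : n - 1 + 2 = n + 1),
        (by ring : n + 2 = n + 1 + 1), zpow_add_one (d α) (n + 1), zpow_add_one (d α) n]
      congr 2
      push_cast
      ring
  exact fun n => ⟨nonneg n, fun hn => hn ▸ neg_one, le_neg_two n⟩
end

section
/- Let R be a commutative ring and let d be a function from normalised pairs to the units of R which is multiplicative on Farey neighbours, i.e. d(γ ⊕ β) = d(γ)·d(β) whenever γ, β are Farey neighbours. Let F be a Farey recursive function with anti-determinant d, let γ_L, γ_R be Farey neighbours with mediant α = γ_L ⊕ γ_R, let (β_k)_{k∈ℤ} be the associated boundary sequence, and set M_α = [[0, 1], [−d(α), −F(α)]]. Then M_α^{−1} · (F(β_0), F(β_1))ᵀ = (d(β_0) d(α)^{−1} F(β_{−1}), F(β_0))ᵀ and M_α^{−2} · (F(β_0), F(β_1))ᵀ = (d(α)^{−1} d(β_{−1})^{−1} F(β_{−2}), d(β_{−1})^{−1}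 F(β_{−1}))ᵀ. -/
/-- The key lemma: the action of `M_α^{−1}` and `M_α^{−2}` on the vector
`(F(β_0), F(β_1))ᵀ`, where `M_α = [[0, 1], [−d(α), −F(α)]]`. -/
theorem farey_recursive_inverse_steps {R : Type*} [CommRing R] (d : ℤ × ℤ → Rˣ) (F : ℤ × ℤ → R)
    (hd : MultiplicativeOnNbrs d) (hF : IsFareyRecursive d F)
    (γL γR : ℤ × ℤ) (hγL : Normalised γL) (hγR : Normalised γR) (hnbr : FareyNbr γL γR)
    (α : ℤ × ℤ) (hα : α = γL + γR)
    (β : ℤ → ℤ × ℤ) (hβ : ∀ k : ℤ, β k = if 0 ≤ k then γR + k • α else γL + (-k - 1) • α)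
    (M : Matrix (Fin 2) (Fin 2) R) (hM : M = !![0, 1; -(d α : R), -F α]) :
    (M ^ (-1 : ℤ)).mulVec ![F (β 0), F (β 1)] =
      ![((d (β 0) * (d α)⁻¹ : Rˣ) : R) * F (β (-1)), F (β 0)] ∧
    (M ^ (-2 : ℤ)).mulVec ![F (β 0), F (β 1)] =
      ![(((d α)⁻¹ * (d (β (-1)))⁻¹ : Rˣ) : R) * F (β (-2)),
        (((d (β (-1)))⁻¹ : Rˣ) : R) * F (β (-1))] := by
  have hdet : IsUnit M.det := by
    rw [hM, Matrix.det_fin_two_of]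
    simp
  have inv_mulVec_eq : ∀ v w : Fin 2 → R, M.mulVec w = v → M⁻¹.mulVec v = w := by
    rintro _ w rfl
    rw [Matrix.mulVec_mulVec, Matrix.nonsing_inv_mul _ hdet, Matrix.one_mulVec]
  have hβ0 : β 0 = γR := by simp [hβ]
  have hβ1 : β 1 = γL + γR + γR := by simp [hβ, hα]; abel
  have hβm1 : β (-1) = γL := by simp [hβ]
  have hβm2 : β (-2) = γR + γL + γL := by simp [hβ, hα]; abel
  have hdα : d α = d γL * d γR := hα ▸ hd γL γR hγL hγR hnbr
  have hFR : F (β 1) = -(d γR : R) * F γL - F γR * F α := by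
    rw [hβ1, hF γL γR hγL hγR hnbr, hα]
  have hFL : F (β (-2)) = -(d γL : R) * F γR - F γL * F α := by
    rw [hβm2, hF γR γL hγR hγL hnbr.symm, hα, add_comm γR γL]
  have hL : (d γL : R) * ((d γL)⁻¹ : Rˣ) = 1 := (d γL).mul_inv
  have hR : (d γR : R) * ((d γR)⁻¹ : Rˣ) = 1 := (d γR).mul_inv
  have inv_mulVec_forward : M⁻¹.mulVec ![F (β 0), F (β 1)] =
      ![((d (β 0) * (d α)⁻¹ : Rˣ) : R) * F (β (-1)), F (β 0)] := by
    apply inv_mulVec_eq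
    rw [hM, hFR, hβ0, hβm1, hdα]
    ext i
    fin_cases i
    · simp [Matrix.mulVec, dotProduct]
    · simp [Matrix.mulVec, dotProduct]
      grind
  have inv_mulVec_backward : M⁻¹.mulVec ![((d (β 0) * (d α)⁻¹ : Rˣ) : R) * F (β (-1)), F (β 0)] =
      ![(((d α)⁻¹ * (d (β (-1)))⁻¹ : Rˣ) : R) * F (β (-2)),
        (((d (β (-1)))⁻¹ : Rˣ) : R) * F (β (-1))] := by
    apply inv_mulVec_eq
    rw [hM, hFL, hβ0, hβm1, hdα]
    ext i
    fin_cases i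
    · simp [Matrix.mulVec, dotProduct]
    · simp [Matrix.mulVec, dotProduct]
      grind
  have hpow : M ^ (-2 : ℤ) = M⁻¹ * M⁻¹ := by
    rw [show (-2 : ℤ) = -((2 : ℕ) : ℤ) from rfl, Matrix.zpow_neg_natCast, ← Matrix.inv_pow', sq]
  refine ⟨by rw [Matrix.zpow_neg_one, inv_mulVec_forward], ?_⟩
  rw [hpow, ← Matrix.mulVec_mulVec, inv_mulVec_forward, inv_mulVec_backward]
end

section
/- Let z ∈ ℂ with z ≠ 4 and let w ∈ ℂ satisfy w² = z² − 4z. Define the sequence (a_n) by a_0 = 2, a_1 = 2 + z, and a_n = 8 − a_{n−2} − (2 − z)·a_{n−1} for n ≥ 2. Then for every n ≥ 0, a_n = 8/(4 − z) + (2^{−n} z/(z − 4))·( (z − 2 − w)^n + (z − 2 + w)^n ). -/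
/-- Closed-form solution of the non-homogeneous recurrence
`a_n = 8 − a_{n−2} − (2 − z)·a_{n−1}` with `a_0 = 2`, `a_1 = 2 + z` (the sequence of parabolic
Farey polynomials `Φ_{1/n}(z)`), where `w` is a fixed square root of `z² − 4z` and `z ≠ 4`. -/
theorem farey_polynomial_closed_form (z w : ℂ) (hz : z ≠ 4) (hw : w ^ 2 = z ^ 2 - 4 * z)
    (a : ℕ → ℂ) (h0 : a 0 = 2) (h1 : a 1 = 2 + z)
    (ha : ∀ n : ℕ, a (n + 2) = 8 - a n - (2 - z) * a (n + 1)) :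
    ∀ n : ℕ, a n = 8 / (4 - z) +
      (2 : ℂ) ^ (-(n : ℤ)) * z / (z - 4) * ((z - 2 - w) ^ n + (z - 2 + w) ^ n) := by
  have hz' : z - 4 ≠ 0 := sub_ne_zero.mpr hz
  have hz'' : 4 - z ≠ 0 := sub_ne_zero.mpr hz.symm
  have hp : ((z - 2 - w) / 2) ^ 2 = (z - 2) * ((z - 2 - w) / 2) - 1 := by
    linear_combination hw / 4
  have hq : ((z - 2 + w) / 2) ^ 2 = (z - 2) * ((z - 2 + w) / 2) - 1 := by
    linear_combination hw / 4
  have key : ∀ n : ℕ,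
      a n * (z - 4) = -8 + z * (((z - 2 - w) / 2) ^ n + ((z - 2 + w) / 2) ^ n) := by
    intro n
    induction n using Nat.twoStepInduction with
    | zero => rw [h0]; ring
    | one => rw [h1]; ring
    | more n ih ih' =>
      rw [ha, pow_add _ n 2, pow_add _ n 2, hp, hq]
      linear_combination -ih - (2 - z) * ih'
  intro n
  have hk := key n
  rw [div_pow, div_pow] at hk
  rw [eq_div_of_mul_eq hz' hk, zpow_neg, zpow_natCast]
  have h2 : (2 : ℂ) ^ n ≠ 0 := pow_ne_zero n two_ne_zero
  rw [show (8 : ℂ) / (4 - z) = -8 / (z - 4) by rw [div_eq_div_iff hz'' hz']; ring]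
  field_simp
end
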